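/- Let n ≥ 3, let 0 < φ ≤ π/2 and 0 < θ < 2φ. Set ω₁ := ω(θ,φ), ψ := φ·(1 − ω₁/π), ω₂ := ω(θ,φ,ψ), and assume φ − ψ ≤ θ ≤ φ + ψ. Then for every θ-code C contained in Cap(n,φ): (i) |{x ∈ C : ψ ≤ dist(x,e) ≤ φ}| ≤ A(n−1, min(ω₁,ω₂)), and (ii) |{x ∈ C : ψ ≤ dist(x,e) ≤ φ}| + 2·|{x ∈ C : dist(x,e) < ψ}| ≤ A(n, ω₁); here A(n−1,·) refers to codes on the unit sphere S^{n−2} ⊂ ℝ^{n−1}. -/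

import Mathlib

noncomputable section

/-- The "North pole" `(0, …, 0, 1)` of the unit sphere in `ℝ^n`. -/
def north (n : ℕ) : EuclideanSpace ℝ (Fin n) :=
  if h : 0 < n then EuclideanSpace.single ⟨n - 1, Nat.sub_lt h Nat.one_pos⟩ 1 else 0

/-- Angular distance between two points: `arccos ⟨x, y⟩`. -/
def aDist {n : ℕ} (x y : EuclideanSpace ℝ (Fin n)) : ℝ := Real.arccos (inner ℝ x y : ℝ)

/-- A finite set of unit vectors with pairwise angular distance at least `θ`. -/
def IsCode {n : ℕ} (θ : ℝ) (C : Finset (EuclideanSpace ℝ (Fin n))) : Prop :=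
  (∀ x ∈ C, ‖x‖ = 1) ∧ ∀ x ∈ C, ∀ y ∈ C, x ≠ y → θ ≤ aDist x y

/-- `A(n, θ)`: maximal size of a `θ`-code on the unit sphere `S^{n-1} ⊂ ℝ^n`. -/
def sphereMax (n : ℕ) (θ : ℝ) : ℕ :=
  sSup {M | ∃ C : Finset (EuclideanSpace ℝ (Fin n)), IsCode θ C ∧ C.card = M}

/-- `A(n, θ, φ)`: maximal size of a `θ`-code in the cap of angular radius `φ` about the
North pole. -/
def capMax (n : ℕ) (θ φ : ℝ) : ℕ :=
  sSup {M | ∃ C : Finset (EuclideanSpace ℝ (Fin n)), IsCode θ C ∧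
    (∀ x ∈ C, aDist x (north n) ≤ φ) ∧ C.card = M}

/-- `A(n, θ, [ψ, φ])`: maximal size of a `θ`-code in the strip `Z(n, [ψ, φ])`. -/
def stripMax (n : ℕ) (θ ψ φ : ℝ) : ℕ :=
  sSup {M | ∃ C : Finset (EuclideanSpace ℝ (Fin n)), IsCode θ C ∧
    (∀ x ∈ C, ψ ≤ aDist x (north n) ∧ aDist x (north n) ≤ φ) ∧ C.card = M}

/-- `m(n, d)`: maximal number of points in the closed unit ball of `ℝ^n` with pairwise
Euclidean distances at least `d`. -/
def ballMax (n : ℕ) (d : ℝ) : ℕ :=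
  sSup {M | ∃ C : Finset (EuclideanSpace ℝ (Fin n)), (∀ x ∈ C, ‖x‖ ≤ 1) ∧
    (∀ x ∈ C, ∀ y ∈ C, x ≠ y → d ≤ dist x y) ∧ C.card = M}

/-- `ω(θ, α, β) = arccos((cos θ - cos α cos β) / (sin α sin β))`. -/
def omega2 (θ α β : ℝ) : ℝ :=
  Real.arccos ((Real.cos θ - Real.cos α * Real.cos β) / (Real.sin α * Real.sin β))

/-- `ω(θ, α) := ω(θ, α, α)`. -/
def omega1 (θ α : ℝ) : ℝ := omega2 θ α α

end


lemma aux_sinusoid (A B c p a q : ℝ) (hA : 0 ≤ A) (hp : 0 ≤ p) (hpa : p ≤ a) (haq : a ≤ q)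
    (hq : q ≤ Real.pi / 2) (h1 : c ≤ A * Real.cos p + B * Real.sin p)
    (h2 : c ≤ A * Real.cos q + B * Real.sin q) : c ≤ A * Real.cos a + B * Real.sin a := by
  have hpi := Real.pi_pos
  rcases le_or_gt 0 c with hc | hc
  · rcases eq_or_lt_of_le (hpa.trans haq) with h | h
    · have : a = p := by linarith
      rw [this]; exact h1
    · have hs : 0 < Real.sin (q - p) := Real.sin_pos_of_pos_of_lt_pi (by linarith) (by linarith)
      have s1 : 0 ≤ Real.sin (q - a) := Real.sin_nonneg_of_nonneg_of_le_pi (by linarith) (by linarith)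
      have s2 : 0 ≤ Real.sin (a - p) := Real.sin_nonneg_of_nonneg_of_le_pi (by linarith) (by linarith)
      have e : Real.sin (q - p) * (A * Real.cos a + B * Real.sin a) =
          Real.sin (q - a) * (A * Real.cos p + B * Real.sin p) +
          Real.sin (a - p) * (A * Real.cos q + B * Real.sin q) := by
        simp only [Real.sin_sub]; ring
      have sub : Real.sin (q - p) ≤ Real.sin (q - a) + Real.sin (a - p) := by
        have : q - p = (q - a) + (a - p) := by ring
        rw [this, Real.sin_add]
        nlinarith [Real.cos_le_one (q - a), Real.cos_le_one (a - p)]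
      have h3 := mul_le_mul_of_nonneg_left h1 s1
      have h4 := mul_le_mul_of_nonneg_left h2 s2
      have h5 := mul_le_mul_of_nonneg_right sub hc
      have : Real.sin (q - p) * c ≤ Real.sin (q - p) * (A * Real.cos a + B * Real.sin a) := by
        rw [e]; linarith
      exact le_of_mul_le_mul_left this hs
  · have ca : 0 ≤ Real.cos a := Real.cos_nonneg_of_neg_pi_div_two_le_of_le (by linarith) (by linarith)
    have sa : 0 ≤ Real.sin a := Real.sin_nonneg_of_nonneg_of_le_pi (by linarith) (by linarith)
    rcases le_or_gt 0 B with hB | hB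
    · have := mul_nonneg hA ca
      have := mul_nonneg hB sa
      linarith
    · have h3 : Real.cos q ≤ Real.cos a :=
        Real.cos_le_cos_of_nonneg_of_le_pi (by linarith) (by linarith) haq
      have h4 : Real.sin a ≤ Real.sin q :=
        Real.sin_le_sin_of_le_of_le_pi_div_two (by linarith) hq haq
      nlinarith

lemma aux_ratio (k φ u : ℝ) (hk : 1 ≤ k) (hφ : 0 < φ) (hkφ : k * φ = Real.pi / 2)
    (hu : 0 ≤ u) (huφ : u ≤ φ) : Real.sin u ≤ Real.sin φ * Real.sin (k * u) := by
  have hpi := Real.pi_pos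
  have hb : ∀ t, 0 ≤ t → t ≤ φ → k * t ≤ Real.pi / 2 ∧ t ≤ Real.pi / 2 ∧ 0 ≤ k * t := by
    intro t h0 h1
    have : k * t ≤ k * φ := mul_le_mul_of_nonneg_left h1 (by linarith)
    refine ⟨by linarith, ?_, by positivity⟩
    nlinarith
  have dp : ∀ t, HasDerivAt (fun t => Real.cos t * Real.sin (k * t) - k * (Real.sin t * Real.cos (k * t)))
      ((k ^ 2 - 1) * (Real.sin t * Real.sin (k * t))) t := by
    intro t
    have hkt : HasDerivAt (fun t : ℝ => k * t) k t := by
      simpa using (hasDerivAt_id t).const_mul k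
    have := ((Real.hasDerivAt_cos t).mul hkt.sin).sub
      (((Real.hasDerivAt_sin t).mul hkt.cos).const_mul k)
    refine this.congr_deriv ?_
    ring
  have mp : MonotoneOn (fun t => Real.cos t * Real.sin (k * t) - k * (Real.sin t * Real.cos (k * t)))
      (Set.Icc 0 φ) := by
    apply monotoneOn_of_deriv_nonneg (convex_Icc 0 φ)
    · exact fun t _ => (dp t).continuousAt.continuousWithinAt
    · exact fun t _ => (dp t).differentiableAt.differentiableWithinAt
    · intro t ht
      rw [interior_Icc] at ht
      rw [(dp t).deriv]
      obtain ⟨h1, h2, h3⟩ := hb t ht.1.le ht.2.le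
      have := Real.sin_nonneg_of_nonneg_of_le_pi ht.1.le (by linarith)
      have := Real.sin_nonneg_of_nonneg_of_le_pi h3 (by linarith)
      have : 0 ≤ k ^ 2 - 1 := by nlinarith
      positivity
  have pp : ∀ t, 0 ≤ t → t ≤ φ →
      0 ≤ Real.cos t * Real.sin (k * t) - k * (Real.sin t * Real.cos (k * t)) := by
    intro t h0 h1
    have := mp (Set.left_mem_Icc.2 hφ.le) ⟨h0, h1⟩ h0
    simpa using this
  rcases eq_or_lt_of_le hu with h | hu
  · rw [← h]; simp
  have spos : ∀ t, 0 < t → t ≤ φ → 0 < Real.sin (k * t) := by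
    intro t h0 h1
    obtain ⟨h1, h2, h3⟩ := hb t h0.le h1
    exact Real.sin_pos_of_pos_of_lt_pi (by positivity) (by linarith)
  have dh : ∀ t, 0 < t → t ≤ φ → HasDerivAt (fun t => Real.sin t / Real.sin (k * t))
      ((Real.cos t * Real.sin (k * t) - Real.sin t * (Real.cos (k * t) * k)) / Real.sin (k * t) ^ 2) t := by
    intro t h0 h1
    have hkt : HasDerivAt (fun t : ℝ => k * t) k t := by
      simpa using (hasDerivAt_id t).const_mul k
    exact (Real.hasDerivAt_sin t).div hkt.sin (spos t h0 h1).ne'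
  have mh : MonotoneOn (fun t => Real.sin t / Real.sin (k * t)) (Set.Icc u φ) := by
    apply monotoneOn_of_deriv_nonneg (convex_Icc u φ)
    · exact fun t ht => (dh t (by linarith [ht.1]) ht.2).continuousAt.continuousWithinAt
    · intro t ht
      rw [interior_Icc] at ht
      exact (dh t (by linarith [ht.1]) ht.2.le).differentiableAt.differentiableWithinAt
    · intro t ht
      rw [interior_Icc] at ht
      rw [(dh t (by linarith [ht.1]) ht.2.le).deriv]
      have := pp t (by linarith [ht.1]) ht.2.le
      apply div_nonneg _ (sq_nonneg _)
      linarith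
  have := mh (Set.left_mem_Icc.2 huφ) (Set.right_mem_Icc.2 huφ) huφ
  simp only [hkφ, Real.sin_pi_div_two, div_one] at this
  rwa [div_le_iff₀ (spos u hu huφ)] at this

lemma aux_one_sub_cos (x : ℝ) : 1 - Real.cos x = 2 * Real.sin (x / 2) ^ 2 := by
  have := Real.cos_sq (x / 2)
  have h2 := Real.sin_sq_add_cos_sq (x / 2)
  rw [show 2 * (x / 2) = x by ring] at this
  linarith

/-- the stretching inequality -/
lemma aux_stretch (k φ a b g : ℝ) (hk : 1 ≤ k) (hφ : 0 < φ) (hkφ : k * φ = Real.pi / 2)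
    (ha : 0 ≤ a) (haφ : a ≤ φ) (hb : 0 ≤ b) (hbφ : b ≤ φ) (hg : |g| ≤ 1) :
    1 - (Real.cos a * Real.cos b + Real.sin a * Real.sin b * g) ≤ Real.sin φ ^ 2 *
      (1 - (Real.cos (k * a) * Real.cos (k * b) + Real.sin (k * a) * Real.sin (k * b) * g)) := by
  have hpi := Real.pi_pos
  have hφ2 : φ ≤ Real.pi / 2 := by nlinarith
  have key : ∀ s, 0 ≤ s → s ≤ 2 * φ →
      1 - Real.cos s ≤ Real.sin φ ^ 2 * (1 - Real.cos (k * s)) := by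
    intro s h0 h1
    have := aux_ratio k φ (s / 2) hk hφ hkφ (by linarith) (by linarith)
    have h3 : 0 ≤ Real.sin (s / 2) := Real.sin_nonneg_of_nonneg_of_le_pi (by linarith) (by linarith)
    rw [aux_one_sub_cos, aux_one_sub_cos, show k * s / 2 = k * (s / 2) by ring]
    have := pow_le_pow_left₀ h3 this 2
    rw [mul_pow] at this
    linarith
  have kp := key (a + b) (by linarith) (by linarith)
  have km : 1 - Real.cos (a - b) ≤ Real.sin φ ^ 2 * (1 - Real.cos (k * (a - b))) := by
    rcases le_total b a with h | h
    · exact key _ (by linarith) (by linarith)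
    · have := key (b - a) (by linarith) (by linarith)
      rw [← Real.cos_neg (a - b), ← Real.cos_neg (k * (a - b))]
      convert this using 3
      · ring
      · congr 2
        ring
  rw [mul_add, Real.cos_add, Real.cos_add] at kp
  rw [mul_sub k a b, Real.cos_sub, Real.cos_sub] at km
  obtain ⟨g1, g2⟩ := abs_le.1 hg
  have e1 := mul_le_mul_of_nonneg_left kp (show 0 ≤ (1 - g) / 2 by linarith)
  have e2 := mul_le_mul_of_nonneg_left km (show 0 ≤ (1 + g) / 2 by linarith)
  nlinarith

lemma aux_card {ι : Type*} {m : ℕ} (J : Finset ι) (F : ι → EuclideanSpace ℝ (Fin m)) (K : ℝ)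
    (hK : K < 1) (h1 : ∀ i ∈ J, ‖F i‖ = 1)
    (h2 : ∀ i ∈ J, ∀ j ∈ J, i ≠ j → inner ℝ (F i) (F j) ≤ K) :
    J.card ≤ sphereMax m (Real.arccos K) := by
  classical
  have hinj : Set.InjOn F J := by
    intro i hi j hj hij
    by_contra hne
    have := h2 i hi j hj hne
    rw [← hij, real_inner_self_eq_norm_sq, h1 i hi] at this
    linarith
  apply le_csSup
  · obtain ⟨t, -, ht, hcov⟩ := Metric.finite_approx_of_totallyBounded
      ((isCompact_sphere (0 : EuclideanSpace ℝ (Fin m)) 1).totallyBounded)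
      (Real.sqrt (2 - 2 * min 1 (max K (-1))) / 2) (by
        have : min 1 (max K (-1)) < 1 := by
          rw [min_lt_iff]; right; rw [max_lt_iff]; constructor <;> linarith
        have := Real.sqrt_pos.2 (show 0 < 2 - 2 * min 1 (max K (-1)) by linarith)
        linarith)
    refine ⟨ht.toFinset.card, ?_⟩
    rintro M ⟨C, ⟨hC1, hC2⟩, rfl⟩
    have : ∀ x ∈ C, ∃ y ∈ t, dist x y < Real.sqrt (2 - 2 * min 1 (max K (-1))) / 2 := by
      intro x hx
      have := hcov (show x ∈ Metric.sphere 0 1 by simp [hC1 x hx])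
      simpa using this
    choose! f hf1 hf2 using this
    apply Finset.card_le_card_of_injOn f
    · intro x hx
      simpa using hf1 x hx
    · intro x hx y hy hxy
      by_contra hne
      have hd : dist x y < Real.sqrt (2 - 2 * min 1 (max K (-1))) := by
        have := hf2 x hx
        have := hf2 y hy
        rw [← hxy] at this
        have := dist_triangle_right x y (f x)
        linarith
      have hi := hC2 x hx y hy hne
      have hin : inner ℝ x y ≤ max K (-1) := by
        by_contra hlt
        push Not at hlt
        rw [max_lt_iff] at hlt
        have h1 : inner ℝ x y ≤ 1 := by
          have := real_inner_le_norm x y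
          rwa [hC1 x hx, hC1 y hy, one_mul] at this
        have a1 : Real.arccos (inner ℝ x y) < Real.arccos (max K (-1)) :=
          Real.strictAntiOn_arccos ⟨le_max_right _ _, by rw [max_le_iff]; constructor <;> linarith⟩
            ⟨hlt.2.le, h1⟩ (max_lt hlt.1 hlt.2)
        have a2 : Real.arccos (max K (-1)) ≤ Real.arccos K := Real.antitone_arccos (le_max_left _ _)
        unfold aDist at hi
        linarith
      have hsq : dist x y ^ 2 = 2 - 2 * inner ℝ x y := by
        rw [dist_eq_norm, @norm_sub_sq_real, hC1 x hx, hC1 y hy]; ring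
      rw [Real.lt_sqrt dist_nonneg, hsq] at hd
      have : min 1 (max K (-1)) = max K (-1) := min_eq_right (by rw [max_le_iff]; constructor <;> linarith)
      linarith
  · refine ⟨J.image F, ⟨?_, ?_⟩, Finset.card_image_of_injOn hinj⟩
    · intro x hx
      obtain ⟨i, hi, rfl⟩ := Finset.mem_image.1 hx
      exact h1 i hi
    · intro x hx y hy hxy
      obtain ⟨i, hi, rfl⟩ := Finset.mem_image.1 hx
      obtain ⟨j, hj, rfl⟩ := Finset.mem_image.1 hy
      exact Real.antitone_arccos (h2 i hi j hj (fun h => hxy (by rw [h])))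

/-- lift from `ℝ^m × ℝ` to `ℝ^(m+1)` -/
noncomputable def auxLift {m : ℕ} (v : EuclideanSpace ℝ (Fin m)) (t : ℝ) :
    EuclideanSpace ℝ (Fin (m + 1)) :=
  WithLp.toLp 2 (Fin.snoc (α := fun _ => ℝ) (fun i => v i) t)

lemma auxLift_inner {m : ℕ} (v w : EuclideanSpace ℝ (Fin m)) (s t : ℝ) :
    inner ℝ (auxLift v s) (auxLift w t) = inner ℝ v w + s * t := by
  simp [auxLift, PiLp.inner_apply, Fin.sum_univ_castSucc, mul_comm]

lemma aux_north {m : ℕ} (x : EuclideanSpace ℝ (Fin (m + 1))) :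
    inner ℝ x (north (m + 1)) = x (Fin.last m) := by
  have : (⟨m + 1 - 1, Nat.sub_lt (Nat.succ_pos m) Nat.one_pos⟩ : Fin (m + 1)) = Fin.last m := rfl
  simp [north, EuclideanSpace.inner_single_right]
  rfl

lemma aux_polar {m : ℕ} (hm : 0 < m) (x : EuclideanSpace ℝ (Fin (m + 1))) (hx : ‖x‖ = 1) :
    ∃ u : EuclideanSpace ℝ (Fin m), ‖u‖ = 1 ∧
      x = auxLift (Real.sin (aDist x (north (m + 1))) • u) (Real.cos (aDist x (north (m + 1)))) := by
  set P : EuclideanSpace ℝ (Fin m) := WithLp.toLp 2 (fun i => x i.castSucc) with hP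
  have hxP : x = auxLift P (x (Fin.last m)) := by
    ext i
    refine Fin.lastCases ?_ (fun j => ?_) i <;> simp [auxLift, hP]
  have hn : ‖P‖ ^ 2 + x (Fin.last m) ^ 2 = 1 := by
    have := auxLift_inner P P (x (Fin.last m)) (x (Fin.last m))
    rw [← hxP, real_inner_self_eq_norm_sq, real_inner_self_eq_norm_sq, hx] at this
    linarith
  have hl : -1 ≤ x (Fin.last m) ∧ x (Fin.last m) ≤ 1 := by
    constructor <;> nlinarith [sq_nonneg ‖P‖]
  have hcos : Real.cos (aDist x (north (m + 1))) = x (Fin.last m) := by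
    rw [aDist, aux_north, Real.cos_arccos hl.1 hl.2]
  have hsin : Real.sin (aDist x (north (m + 1))) = ‖P‖ := by
    rw [aDist, aux_north, Real.sin_arccos]
    rw [show 1 - x (Fin.last m) ^ 2 = ‖P‖ ^ 2 by linarith, Real.sqrt_sq (norm_nonneg _)]
  rw [hcos, hsin]
  by_cases h0 : P = 0
  · refine ⟨EuclideanSpace.single ⟨0, hm⟩ 1, by simp, ?_⟩
    rw [h0, norm_zero, zero_smul, ← h0]; exact hxP
  · have : ‖P‖ ≠ 0 := norm_ne_zero_iff.2 h0
    refine ⟨‖P‖⁻¹ • P, by rw [norm_smul, norm_inv, norm_norm, inv_mul_cancel₀ this], ?_⟩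
    rw [smul_smul, mul_inv_cancel₀ this, one_smul]; exact hxP

set_option maxHeartbeats 2000000

open Classical in
theorem stmt18 (n : ℕ) (hn : 3 ≤ n) (θ φ : ℝ) (hφ : 0 < φ) (hφ2 : φ ≤ Real.pi / 2)
    (hθ : 0 < θ) (hθ2 : θ < 2 * φ) (ψ : ℝ) (hψ : ψ = φ * (1 - omega1 θ φ / Real.pi))
    (hlo : φ - ψ ≤ θ) (hhi : θ ≤ φ + ψ)
    (C : Finset (EuclideanSpace ℝ (Fin n))) (hC : IsCode θ C)
    (hCap : ∀ x ∈ C, aDist x (north n) ≤ φ) :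
    (C.filter fun x => ψ ≤ aDist x (north n) ∧ aDist x (north n) ≤ φ).card ≤
        sphereMax (n - 1) (min (omega1 θ φ) (omega2 θ φ ψ)) ∧
      (C.filter fun x => ψ ≤ aDist x (north n) ∧ aDist x (north n) ≤ φ).card +
          2 * (C.filter fun x => aDist x (north n) < ψ).card ≤
        sphereMax n (omega1 θ φ) := by
  obtain ⟨m, rfl⟩ : ∃ m, n = m + 1 := ⟨n - 1, by omega⟩
  have hpi := Real.pi_pos
  have hm : 0 < m := by omega
  have hsφ : 0 < Real.sin φ := Real.sin_pos_of_pos_of_lt_pi hφ (by linarith)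
  have hscφ := Real.sin_sq_add_cos_sq φ
  -- the number K = cos ω₁
  set K : ℝ := (Real.cos θ - Real.cos φ * Real.cos φ) / (Real.sin φ * Real.sin φ) with hKdef
  have hω : omega1 θ φ = Real.arccos K := rfl
  have hKe : Real.sin φ ^ 2 * (1 - K) = 1 - Real.cos θ := by
    rw [hKdef]; field_simp; linarith
  have hcθ : Real.cos θ < 1 := by
    have := Real.cos_lt_cos_of_nonneg_of_le_pi le_rfl (by linarith : θ ≤ Real.pi) hθ
    simpa using this
  have hK1 : K < 1 := by
    by_contra h
    push Not at h
    nlinarith [sq_nonneg (Real.sin φ)]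
  have hK2 : -1 < K := by
    have h : Real.cos (2 * φ) < Real.cos θ :=
      Real.cos_lt_cos_of_nonneg_of_le_pi hθ.le (by linarith) hθ2
    rw [Real.cos_two_mul] at h
    by_contra h'
    push Not at h'
    nlinarith [sq_pos_of_pos hsφ]
  have hω0 : 0 < omega1 θ φ := by rw [hω]; exact Real.arccos_pos.2 hK1
  have hωpi : omega1 θ φ < Real.pi := by
    rw [hω]
    rcases lt_or_eq_of_le (Real.arccos_le_pi K) with h | h
    · exact h
    · rw [Real.arccos_eq_pi] at h; linarith
  have hcosω : Real.cos (omega1 θ φ) = K := by rw [hω, Real.cos_arccos hK2.le hK1.le]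
  have hψ0 : 0 < ψ := by
    rw [hψ]
    have : omega1 θ φ / Real.pi < 1 := by rw [div_lt_one hpi]; exact hωpi
    exact mul_pos hφ (by linarith)
  have hψφ : ψ < φ := by
    rw [hψ]
    have : 0 < omega1 θ φ / Real.pi := by positivity
    nlinarith
  -- strictness of φ - ψ < θ
  have hstrict : φ - ψ < θ := by
    by_contra hcon
    push Not at hcon
    set t := omega1 θ φ / Real.pi with ht
    have ht0 : 0 < t := by positivity
    have ht1 : t < 1 := by rw [ht, div_lt_one hpi]; exact hωpi
    have hωt : omega1 θ φ = Real.pi * t := by rw [ht]; field_simp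
    have hθt : θ ≤ φ * t := by rw [hψ] at hcon; linarith
    have h1 : Real.sin (θ / 2) ^ 2 = Real.sin φ ^ 2 * Real.sin (omega1 θ φ / 2) ^ 2 := by
      have e1 := aux_one_sub_cos θ
      have e2 := aux_one_sub_cos (omega1 θ φ)
      rw [hcosω] at e2
      rw [e2] at hKe
      linarith
    have h2 : t ≤ Real.sin (omega1 θ φ / 2) := by
      have := Real.mul_le_sin (x := omega1 θ φ / 2) (by linarith) (by linarith)
      convert this using 1
      rw [ht]; field_simp
    have h3 : 2 / Real.pi * φ ≤ Real.sin φ := Real.mul_le_sin hφ.le hφ2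
    have h4 : Real.sin (θ / 2) < θ / 2 := Real.sin_lt (by linarith)
    have h5 : 0 ≤ Real.sin (θ / 2) := Real.sin_nonneg_of_nonneg_of_le_pi (by linarith) (by linarith)
    have h6 : φ / 2 < 2 / Real.pi * φ := by
      have : (1:ℝ) / 2 < 2 / Real.pi := by
        rw [div_lt_div_iff₀ (by norm_num) hpi]; linarith [Real.pi_lt_four]
      nlinarith
    have h7 : φ / 2 * t < Real.sin φ * Real.sin (omega1 θ φ / 2) := by
      apply mul_lt_mul (by linarith) h2 ht0 hsφ.le
    rw [← mul_pow] at h1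
    have h8 : Real.sin (θ / 2) < Real.sin φ * Real.sin (omega1 θ φ / 2) := by linarith
    have := pow_lt_pow_left₀ h8 h5 (two_ne_zero)
    linarith
  -- polar coordinates
  have hpol : ∀ x : EuclideanSpace ℝ (Fin (m + 1)), ∃ u : EuclideanSpace ℝ (Fin m), ‖x‖ = 1 →
      ‖u‖ = 1 ∧ x = auxLift (Real.sin (aDist x (north (m + 1))) • u)
        (Real.cos (aDist x (north (m + 1)))) := by
    intro x
    by_cases hx : ‖x‖ = 1
    · obtain ⟨u, hu⟩ := aux_polar hm x hx
      exact ⟨u, fun _ => hu⟩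
    · exact ⟨0, fun h => absurd h hx⟩
  choose U hU using hpol
  set r : EuclideanSpace ℝ (Fin (m + 1)) → ℝ := fun x => aDist x (north (m + 1)) with hr
  have hU1 : ∀ x ∈ C, ‖U x‖ = 1 := fun x hx => (hU x (hC.1 x hx)).1
  have hU2 : ∀ x ∈ C, x = auxLift (Real.sin (r x) • U x) (Real.cos (r x)) :=
    fun x hx => (hU x (hC.1 x hx)).2
  have hr0 : ∀ x, 0 ≤ r x := fun x => Real.arccos_nonneg _
  have hg : ∀ x ∈ C, ∀ y ∈ C, |inner ℝ (U x) (U y)| ≤ 1 := by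
    intro x hx y hy
    have := abs_real_inner_le_norm (U x) (U y)
    rwa [hU1 x hx, hU1 y hy, one_mul] at this
  have hsep : ∀ x ∈ C, ∀ y ∈ C, x ≠ y → Real.cos (r x) * Real.cos (r y) +
      Real.sin (r x) * Real.sin (r y) * inner ℝ (U x) (U y) ≤ Real.cos θ := by
    intro x hx y hy hxy
    have h1 : inner ℝ x y = Real.cos (r x) * Real.cos (r y) +
      Real.sin (r x) * Real.sin (r y) * inner ℝ (U x) (U y) := by
      conv_lhs => rw [hU2 x hx, hU2 y hy]
      rw [auxLift_inner, real_inner_smul_left, real_inner_smul_right]; ring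
    rw [← h1]
    have h2 := hC.2 x hx y hy hxy
    have h3 : |inner ℝ x y| ≤ 1 := by
      have := abs_real_inner_le_norm x y
      rwa [hC.1 x hx, hC.1 y hy, one_mul] at this
    have h4 := Real.cos_le_cos_of_nonneg_of_le_pi hθ.le (Real.arccos_le_pi _) h2
    rwa [Real.cos_arccos (abs_le.1 h3).1 (abs_le.1 h3).2] at h4
  constructor
  · -- part (i)
    set L : ℝ := (Real.cos θ - Real.cos φ * Real.cos ψ) / (Real.sin φ * Real.sin ψ) with hLdef
    have hsψ : 0 < Real.sin ψ := Real.sin_pos_of_pos_of_lt_pi hψ0 (by linarith)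
    have hscψ := Real.sin_sq_add_cos_sq ψ
    have hω2 : omega2 θ φ ψ = Real.arccos L := rfl
    have hmin : min (omega1 θ φ) (omega2 θ φ ψ) = Real.arccos (max K L) := by
      rw [hω, hω2]; exact (Real.antitone_arccos.map_max).symm
    have hL1 : L < 1 := by
      rw [hLdef, div_lt_one (by positivity)]
      have : Real.cos θ < Real.cos (φ - ψ) :=
        Real.cos_lt_cos_of_nonneg_of_le_pi (by linarith) (by linarith) hstrict
      rw [Real.cos_sub] at this
      linarith
    rw [hmin]
    have hLe : L * (Real.sin φ * Real.sin ψ) = Real.cos θ - Real.cos φ * Real.cos ψ := by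
      rw [hLdef]; field_simp
    set M := max K L with hM
    have hMK : K ≤ M := le_max_left _ _
    have hML : L ≤ M := le_max_right _ _
    have hM1 : M < 1 := max_lt hK1 hL1
    have cφ : 0 ≤ Real.cos φ := Real.cos_nonneg_of_neg_pi_div_two_le_of_le (by linarith) hφ2
    have cψ : 0 ≤ Real.cos ψ := Real.cos_nonneg_of_neg_pi_div_two_le_of_le (by linarith) (by linarith)
    have sψφ : Real.sin ψ ≤ Real.sin φ :=
      Real.sin_le_sin_of_le_of_le_pi_div_two (by linarith) hφ2 hψφ.le
    have H1 : Real.cos θ ≤ Real.cos φ * Real.cos φ + (M * Real.sin φ) * Real.sin φ := by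
      nlinarith [mul_pos hsφ hsφ]
    have H2 : Real.cos θ ≤ Real.cos φ * Real.cos ψ + (M * Real.sin φ) * Real.sin ψ := by
      nlinarith [mul_pos hsφ hsψ]
    have H3 : Real.cos θ ≤ Real.cos ψ * Real.cos ψ + (M * Real.sin ψ) * Real.sin ψ := by
      have q : Real.sin ψ ^ 2 ≤ Real.sin φ ^ 2 := pow_le_pow_left₀ hsψ.le sψφ 2
      have q1 := mul_le_mul_of_nonneg_right q (show 0 ≤ 1 - M by linarith)
      have q2 := mul_le_mul_of_nonneg_left (show 1 - M ≤ 1 - K by linarith) (sq_nonneg (Real.sin φ))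
      nlinarith
    have H : ∀ a b, ψ ≤ a → a ≤ φ → ψ ≤ b → b ≤ φ →
        Real.cos θ ≤ Real.cos a * Real.cos b + (M * Real.sin a) * Real.sin b := by
      intro a b a1 a2 b1 b2
      have ca : 0 ≤ Real.cos a :=
        Real.cos_nonneg_of_neg_pi_div_two_le_of_le (by linarith) (by linarith)
      have E1 := aux_sinusoid (Real.cos φ) (M * Real.sin φ) (Real.cos θ) ψ a φ cφ hψ0.le a1 a2 hφ2 H2 H1
      have E2 := aux_sinusoid (Real.cos ψ) (M * Real.sin ψ) (Real.cos θ) ψ a φ cψ hψ0.le a1 a2 hφ2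
        H3 (by linarith)
      exact aux_sinusoid (Real.cos a) (M * Real.sin a) (Real.cos θ) ψ b φ ca hψ0.le b1 b2 hφ2
        (by linarith) (by linarith)
    apply aux_card _ U M hM1
    · intro x hx
      exact hU1 x (Finset.mem_filter.1 hx).1
    · intro x hx y hy hxy
      obtain ⟨x1, x2, x3⟩ := Finset.mem_filter.1 hx
      obtain ⟨y1, y2, y3⟩ := Finset.mem_filter.1 hy
      have h1 := hsep x x1 y y1 hxy
      have h2 := H (r x) (r y) x2 x3 y2 y3
      have px : 0 < Real.sin (r x) := Real.sin_pos_of_pos_of_lt_pi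
        (lt_of_lt_of_le hψ0 x2) (lt_of_le_of_lt x3 (by linarith))
      have py : 0 < Real.sin (r y) := Real.sin_pos_of_pos_of_lt_pi
        (lt_of_lt_of_le hψ0 y2) (lt_of_le_of_lt y3 (by linarith))
      have : Real.sin (r x) * Real.sin (r y) * inner ℝ (U x) (U y) ≤
        Real.sin (r x) * Real.sin (r y) * M := by linarith
      exact le_of_mul_le_mul_left this (mul_pos px py)
  · -- part (ii)
    set k : ℝ := Real.pi / (2 * φ) with hk
    have hkφ : k * φ = Real.pi / 2 := by rw [hk]; field_simp
    have hk1 : 1 ≤ k := by rw [hk, le_div_iff₀ (by linarith)]; linarith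
    set I := C.filter fun x => aDist x (north (m + 1)) < ψ with hI
    have hcard : (C.filter fun x => ψ ≤ aDist x (north (m + 1)) ∧ aDist x (north (m + 1)) ≤ φ).card
        + I.card = C.card := by
      rw [← Finset.card_filter_add_card_filter_not (s := C)
        (fun x => ψ ≤ aDist x (north (m + 1)))]
      congr 1
      · congr 1
        apply Finset.filter_congr
        intro x hx
        exact ⟨fun h => h.1, fun h => ⟨h, hCap x hx⟩⟩
      · congr 1
        apply Finset.filter_congr
        intro x hx
        exact not_le.symm
    have hJ : (C.disjSum I).card = C.card + I.card := Finset.card_disjSum _ _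
    rw [show ∀ a b : ℕ, a + 2 * b = (a + b) + b by intros; ring, hcard, ← hJ, hω]
    have kr : ∀ x ∈ C, 0 ≤ Real.cos (k * r x) := by
      intro x hx
      have h1 : k * r x ≤ k * φ := mul_le_mul_of_nonneg_left (hCap x hx) (by linarith)
      have h2 : 0 ≤ k * r x := mul_nonneg (by linarith) (hr0 x)
      exact Real.cos_nonneg_of_neg_pi_div_two_le_of_le (by linarith) (by linarith)
    have main : ∀ x ∈ C, ∀ y ∈ C, x ≠ y → Real.cos (k * r x) * Real.cos (k * r y) +
        Real.sin (k * r x) * Real.sin (k * r y) * inner ℝ (U x) (U y) ≤ K := by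
      intro x hx y hy hxy
      have h1 := hsep x hx y hy hxy
      have h2 := aux_stretch k φ (r x) (r y) _ hk1 hφ hkφ (hr0 x) (hCap x hx) (hr0 y) (hCap y hy)
        (hg x hx y hy)
      have h3 := le_of_mul_le_mul_left ((show Real.sin φ ^ 2 * (1 - K) ≤ _ by linarith).trans h2)
        (by positivity)
      linarith
    have opp : ∀ x ∈ I, Real.sin (k * r x) * Real.sin (k * r x) -
        Real.cos (k * r x) * Real.cos (k * r x) ≤ K := by
      intro x hx
      have h1 : r x < ψ := (Finset.mem_filter.1 hx).2
      have h2 : k * r x ≤ k * ψ := mul_le_mul_of_nonneg_left h1.le (by linarith)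
      have h3 : k * ψ = Real.pi / 2 - omega1 θ φ / 2 := by
        rw [hψ, ← mul_assoc, hkφ]; field_simp
      have h4 : 0 ≤ k * r x := mul_nonneg (by linarith) (hr0 x)
      have h5 : Real.cos (Real.pi - 2 * (k * r x)) ≤ Real.cos (omega1 θ φ) :=
        Real.cos_le_cos_of_nonneg_of_le_pi hω0.le (by linarith) (by linarith)
      rw [hcosω, Real.cos_pi_sub, Real.cos_two_mul] at h5
      nlinarith [Real.sin_sq_add_cos_sq (k * r x)]
    have inn : ∀ x y : EuclideanSpace ℝ (Fin (m + 1)), ∀ s t : ℝ,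
        inner ℝ (auxLift (Real.sin (k * r x) • U x) s) (auxLift (Real.sin (k * r y) • U y) t) =
        Real.sin (k * r x) * Real.sin (k * r y) * inner ℝ (U x) (U y) + s * t := by
      intro x y s t
      rw [auxLift_inner, real_inner_smul_left, real_inner_smul_right]; ring
    have nrm : ∀ x ∈ C, ∀ s : ℝ, s ^ 2 = Real.cos (k * r x) ^ 2 →
        ‖auxLift (Real.sin (k * r x) • U x) s‖ = 1 := by
      intro x hx s hs
      have h1 := inn x x s s
      rw [real_inner_self_eq_norm_sq, real_inner_self_eq_norm_sq, hU1 x hx] at h1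
      have h2 : ‖auxLift (Real.sin (k * r x) • U x) s‖ ^ 2 = 1 := by
        rw [h1]; nlinarith [Real.sin_sq_add_cos_sq (k * r x)]
      exact (pow_eq_one_iff_of_nonneg (norm_nonneg _) two_ne_zero).1 h2
    have IC : ∀ x ∈ I, x ∈ C := fun x hx => (Finset.mem_filter.1 hx).1
    have cross : ∀ x ∈ C, ∀ y ∈ I, Real.sin (k * r x) * Real.sin (k * r y) * inner ℝ (U x) (U y)
        - Real.cos (k * r x) * Real.cos (k * r y) ≤ K := by
      intro x hx y hy
      by_cases hxy : x = y
      · subst hxy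
        rw [real_inner_self_eq_norm_sq, hU1 x hx]
        have := opp x hy
        linarith
      · have := main x hx y (IC y hy) hxy
        have := mul_nonneg (kr x hx) (kr y (IC y hy))
        linarith
    apply aux_card (C.disjSum I) (Sum.elim
      (fun x => auxLift (Real.sin (k * r x) • U x) (Real.cos (k * r x)))
      (fun x => auxLift (Real.sin (k * r x) • U x) (-Real.cos (k * r x)))) K hK1
    · rintro (x | x) hx
      · exact nrm x (Finset.inl_mem_disjSum.1 hx) _ rfl
      · exact nrm x (IC x (Finset.inr_mem_disjSum.1 hx)) _ (by ring)
    · rintro (x | x) hx (y | y) hy hxy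
      · have := main x (Finset.inl_mem_disjSum.1 hx) y (Finset.inl_mem_disjSum.1 hy)
          (fun h => hxy (by rw [h]))
        simp only [Sum.elim_inl, inn]
        linarith
      · have := cross x (Finset.inl_mem_disjSum.1 hx) y (Finset.inr_mem_disjSum.1 hy)
        simp only [Sum.elim_inl, Sum.elim_inr, inn]
        linarith
      · have := cross y (Finset.inl_mem_disjSum.1 hy) x (Finset.inr_mem_disjSum.1 hx)
        simp only [Sum.elim_inl, Sum.elim_inr, inn]
        rw [real_inner_comm]
        linarith
      · have := main x (IC x (Finset.inr_mem_disjSum.1 hx)) y (IC y (Finset.inr_mem_disjSum.1 hy))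
          (fun h => hxy (by rw [h]))
        simp only [Sum.elim_inr, inn]
        linarith
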